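/- arXiv:2308.04166 — 2 statements merged into one kernel-verified Lean document; each statement's English description precedes it below -/
import Mathlib

section
/- Let n be a positive natural number and let X be a random variable with the chi-square distribution with n degrees of freedom (i.e., the Gamma distribution with shape n/2 and rate 1/2). Then for every a ≥ 0, ℙ[X − n ≥ 2√(n·a) + 2a] ≤ e^{−a}. -/
/-!
The proof is a Chernoff bound for the Gamma distribution, done by exponential tilting. For
`0 < s ≤ r` the density of `Gamma(k, r)` is `(r / s) ^ k * exp (-(r - s) x)` times that of
`Gamma(k, s)`, so the mass of `[c, ∞)` under `Gamma(k, r)` is at most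
`(r / s) ^ k * exp (-(r - s) c)` (`gammaMeasure_Ici_le`).

Put `u = √n`, `v = √a`, so that the threshold is `c = u² + 2uv + 2v²`, and tilt to the rate
`s = u / (2 (u + 2v))`. With `z = r / s = (u + 2v) / u`, the inequality
`log z ≤ (z - z⁻¹) / 2` (which is `w ≤ sinh w` at `w = log z`) makes the exponent
`(u² / 2) log z - (1 / 2 - s) c` at most `-v² = -a`.
-/

open MeasureTheory ProbabilityTheory Real

/-- Chernoff bound for the Gamma distribution, with the tilted rate `s` as free parameter. -/
lemma gammaMeasure_Ici_le {k r s : ℝ} (hk : 0 < k) (hs : 0 < s) (hsr : s ≤ r) (c : ℝ) :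
    gammaMeasure k r (Set.Ici c) ≤ ENNReal.ofReal ((r / s) ^ k * exp (-((r - s) * c))) := by
  have hr : 0 < r := hs.trans_le hsr
  have hpdf : ∀ x ∈ Set.Ici c, gammaPDF k r x ≤
      ENNReal.ofReal ((r / s) ^ k * exp (-((r - s) * c))) * gammaPDF k s x := by
    intro x hx
    rcases lt_or_ge x 0 with h0 | h0
    · simp [gammaPDF_of_neg h0]
    rw [gammaPDF_of_nonneg h0, gammaPDF_of_nonneg h0, ← ENNReal.ofReal_mul (by positivity)]
    apply ENNReal.ofReal_le_ofReal
    have hG := Gamma_pos_of_pos hk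
    have hsk := rpow_pos_of_pos hs k
    have hexp : exp (-(r * x)) ≤ exp (-((r - s) * c)) * exp (-(s * x)) := by
      rw [← exp_add, exp_le_exp]
      nlinarith [mul_le_mul_of_nonneg_left (show c ≤ x from hx) (sub_nonneg.2 hsr)]
    calc r ^ k / Gamma k * x ^ (k - 1) * exp (-(r * x))
        ≤ r ^ k / Gamma k * x ^ (k - 1) * (exp (-((r - s) * c)) * exp (-(s * x))) := by
          gcongr
      _ = _ := by
          rw [div_rpow hr.le hs.le]
          field_simp
  calc gammaMeasure k r (Set.Ici c)
      = ∫⁻ x in Set.Ici c, gammaPDF k r x := withDensity_apply _ measurableSet_Ici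
    _ ≤ ∫⁻ x in Set.Ici c,
          ENNReal.ofReal ((r / s) ^ k * exp (-((r - s) * c))) * gammaPDF k s x :=
        setLIntegral_mono' measurableSet_Ici hpdf
    _ ≤ ∫⁻ x, ENNReal.ofReal ((r / s) ^ k * exp (-((r - s) * c))) * gammaPDF k s x :=
        setLIntegral_le_lintegral _ _
    _ = ENNReal.ofReal ((r / s) ^ k * exp (-((r - s) * c))) := by
        rw [lintegral_const_mul' _ _ ENNReal.ofReal_ne_top, lintegral_gammaPDF_eq_one hk hs,
          mul_one]

lemma log_le_half_sub_inv {z : ℝ} (hz : 1 ≤ z) : log z ≤ (z - z⁻¹) / 2 := by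
  rw [← sinh_log (by linarith)]
  exact self_le_sinh_iff.2 (log_nonneg hz)

/-- The Chernoff exponent at the optimal tilt, with `u = √n` and `v = √a`. -/
lemma chernoff_exponent_le {u v : ℝ} (hu : 0 < u) (hv : 0 ≤ v) :
    ((1 / 2) / (u / (2 * (u + 2 * v)))) ^ (u ^ 2 / 2) *
      exp (-((1 / 2 - u / (2 * (u + 2 * v))) * (u ^ 2 + 2 * (u * v) + 2 * v ^ 2)))
      ≤ exp (-v ^ 2) := by
  have hz : (1 / 2) / (u / (2 * (u + 2 * v))) = (u + 2 * v) / u := by field_simp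
  have hz1 : 1 ≤ (u + 2 * v) / u := by
    rw [le_div_iff₀ hu]
    linarith
  rw [hz, rpow_def_of_pos (by linarith), ← exp_add, exp_le_exp]
  have hlog := mul_le_mul_of_nonneg_right (log_le_half_sub_inv hz1)
    (by positivity : 0 ≤ u ^ 2 / 2)
  have hid : ((u + 2 * v) / u - ((u + 2 * v) / u)⁻¹) / 2 * (u ^ 2 / 2) +
      -((1 / 2 - u / (2 * (u + 2 * v))) * (u ^ 2 + 2 * (u * v) + 2 * v ^ 2)) = -v ^ 2 := by
    have : u + 2 * v ≠ 0 := by positivity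
    field_simp
    ring
  linarith

/-- Laurent–Massart tail bound for the chi-square distribution with `n` degrees of
freedom (the Gamma distribution with shape `n/2` and rate `1/2`):
`ℙ[X − n ≥ 2√(n·a) + 2a] ≤ e^{−a}` for every `a ≥ 0`. -/
theorem chi_square_tail_bound (n : ℕ) (hn : 0 < n)
    {Ω : Type*} [MeasureSpace Ω] [IsProbabilityMeasure (ℙ : Measure Ω)]
    (X : Ω → ℝ) (hX : Measure.map X ℙ = gammaMeasure (n / 2) (1 / 2))
    (a : ℝ) (ha : 0 ≤ a) :
    ℙ {ω | X ω - n ≥ 2 * Real.sqrt (n * a) + 2 * a} ≤ ENNReal.ofReal (Real.exp (-a)) := by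
  have hn' : (0 : ℝ) < n := by exact_mod_cast hn
  have hk : (0 : ℝ) < n / 2 := by positivity
  -- `Measure.map` along a non-a.e.-measurable function is zero, so `hX` forces measurability.
  have hXm : AEMeasurable X ℙ := by
    by_contra h
    have := isProbabilityMeasure_gammaMeasure hk (by norm_num : (0 : ℝ) < 1 / 2)
    rw [← hX, Measure.map_of_not_aemeasurable h] at this
    exact absurd rfl (IsProbabilityMeasure.ne_zero (0 : Measure ℝ))
  have hu : 0 < √(n : ℝ) := sqrt_pos.2 hn'
  have hv : 0 ≤ √a := sqrt_nonneg a
  have hu2 : √(n : ℝ) ^ 2 = n := sq_sqrt hn'.le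
  have hv2 : √a ^ 2 = a := sq_sqrt ha
  have hset : {ω | X ω - n ≥ 2 * √(n * a) + 2 * a} =
      X ⁻¹' Set.Ici (n + 2 * (√n * √a) + 2 * a) := by
    ext ω
    simp only [Set.mem_ofPred_eq, Set.mem_preimage, Set.mem_Ici, ge_iff_le,
      sqrt_mul hn'.le]
    constructor <;> intro h <;> linarith
  have hs : √(n : ℝ) / (2 * (√n + 2 * √a)) ≤ 1 / 2 := by
    rw [div_le_div_iff₀ (by positivity) (by norm_num)]
    linarith
  have hexp := chernoff_exponent_le hu hv
  rw [hu2, hv2] at hexp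
  rw [hset, ← Measure.map_apply_of_aemeasurable hXm measurableSet_Ici, hX]
  exact (gammaMeasure_Ici_le hk (by positivity) hs _).trans (ENNReal.ofReal_le_ofReal hexp)
end

section
/- Let σ > 0, θ ∈ ℝ, r, r⊥ ∈ ℝ, and set x₀ = r·cos θ + r⊥·sin θ and p₀ = r·sin θ − r⊥·cos θ. Let X' and P' be independent Gaussian random variables with X' ~ N(x₀/√2, 1/2) and P' ~ N(−p₀/√2, 1/2), and define the estimator R̃ = √2 · (σ²/(1+σ²)) · (X'·cos θ − P'·sin θ). Then 𝔼[(R̃ − r)²] = (σ²/(1+σ²))² + r² · (1/(1+σ²))². -/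
open MeasureTheory ProbabilityTheory Real

/-!
The error `R̃ - r` is an affine combination `a X' + b P' - r` of two independent Gaussians, with
`k = σ² / (1 + σ²)`, `a = √2 k cos θ` and `b = -√2 k sin θ`. It is therefore Gaussian. The `r⊥`
contributions to its mean cancel, leaving `k r - r = -r / (1 + σ²)`, and its variance is
`(a² + b²) / 2 = k²`. The claim is then the identity "second moment = variance + mean squared",
which is `integral_sq_of_hasLaw_gaussianReal`.
-/

lemma integral_sq_of_hasLaw_gaussianReal {Ω : Type*} [MeasurableSpace Ω] {μ : Measure Ω}
    {Y : Ω → ℝ} {m : ℝ} {v : NNReal} (hY : HasLaw Y (gaussianReal m v) μ) :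
    ∫ ω, Y ω ^ 2 ∂μ = v + m ^ 2 := by
  have hmap : ∫ ω, Y ω ^ 2 ∂μ = ∫ y, y ^ 2 ∂(gaussianReal m v) := by
    rw [← hY.map_eq, integral_map hY.aemeasurable (by fun_prop)]
  have hvar := variance_eq_sub (memLp_id_gaussianReal (μ := m) (v := v) 2)
  rw [variance_id_gaussianReal] at hvar
  simp only [Pi.pow_apply, id_eq, integral_id_gaussianReal] at hvar
  rw [hmap]
  linarith

/-- Expected squared error of the heterodyne-attack estimator: with independent
heterodyne outcomes `X' ~ N(x₀/√2, 1/2)` and `P' ~ N(−p₀/√2, 1/2)`, where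
`x₀ = r cos θ + r⊥ sin θ` and `p₀ = r sin θ − r⊥ cos θ`, the estimator
`R̃ = √2·(σ²/(1+σ²))·(X' cos θ − P' sin θ)` satisfies
`𝔼[(R̃ − r)²] = (σ²/(1+σ²))² + r²/(1+σ²)²`. -/
theorem heterodyne_attack_error (σ : ℝ) (hσ : 0 < σ) (θ r rp : ℝ)
    (x₀ p₀ : ℝ) (hx₀ : x₀ = r * Real.cos θ + rp * Real.sin θ)
    (hp₀ : p₀ = r * Real.sin θ - rp * Real.cos θ)
    {Ω : Type*} [MeasureSpace Ω] [IsProbabilityMeasure (ℙ : Measure Ω)]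
    (X' P' : Ω → ℝ)
    (hX : Measure.map X' ℙ = gaussianReal (x₀ / Real.sqrt 2) (1 / 2))
    (hP : Measure.map P' ℙ = gaussianReal (-p₀ / Real.sqrt 2) (1 / 2))
    (hindep : IndepFun X' P' ℙ) :
    ∫ ω, (Real.sqrt 2 * (σ ^ 2 / (1 + σ ^ 2)) * (X' ω * Real.cos θ - P' ω * Real.sin θ)
        - r) ^ 2 ∂ℙ =
      (σ ^ 2 / (1 + σ ^ 2)) ^ 2 + r ^ 2 * (1 / (1 + σ ^ 2)) ^ 2 := by
  have aemeas {Z : Ω → ℝ} {m : ℝ} {v : NNReal} (h : Measure.map Z ℙ = gaussianReal m v) :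
      AEMeasurable Z ℙ :=
    -- `Measure.map` of a map that is not a.e. measurable is zero, which a Gaussian law is not.
    AEMeasurable.of_map_ne_zero (h ▸ IsProbabilityMeasure.ne_zero _)
  set k := σ ^ 2 / (1 + σ ^ 2) with hk
  have hXlaw := gaussianReal_const_mul ⟨aemeas hX, hX⟩ (√2 * k * cos θ)
  have hPlaw := gaussianReal_const_mul ⟨aemeas hP, hP⟩ (-(√2 * k * sin θ))
  have hind : IndepFun (fun ω ↦ √2 * k * cos θ * X' ω) (fun ω ↦ -(√2 * k * sin θ) * P' ω) ℙ :=
    hindep.comp (measurable_const_mul _) (measurable_const_mul _)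
  have hsum := gaussianReal_sub_const
    ⟨hXlaw.aemeasurable.add hPlaw.aemeasurable,
      gaussianReal_add_gaussianReal_of_indepFun hind hXlaw.map_eq hPlaw.map_eq⟩ r
  have hmom := integral_sq_of_hasLaw_gaussianReal hsum
  have h2 : √2 ^ 2 = 2 := Real.sq_sqrt (by norm_num)
  have hs : √2 ≠ 0 := by positivity
  have hcs := Real.sin_sq_add_cos_sq θ
  have hmean : √2 * k * cos θ * (x₀ / √2) + -(√2 * k * sin θ) * (-p₀ / √2) - r
      = -(r * (1 / (1 + σ ^ 2))) := by
    have h1 : √2 * k * cos θ * (x₀ / √2) + -(√2 * k * sin θ) * (-p₀ / √2)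
        = k * (x₀ * cos θ + p₀ * sin θ) := by
      field_simp
    have h3 : x₀ * cos θ + p₀ * sin θ = r := by
      rw [hx₀, hp₀]
      linear_combination r * hcs
    rw [h1, h3, hk]
    field_simp
    ring
  rw [hmean] at hmom
  calc _ = _ := by
        refine integral_congr_ae (.of_forall fun ω ↦ ?_)
        simp only [Pi.add_apply]
        ring
    _ = _ := hmom
    _ = _ := by
        push_cast
        linear_combination (k ^ 2 / 2 * (cos θ ^ 2 + sin θ ^ 2)) * h2 + k ^ 2 * hcs
end
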